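/- If the importance function used in the SEI estimator is the exact subtree-cost function, i.e. r(x) = Cost(T_x) for every node x (assuming Cost(T_x) > 0 for all nodes x), then the SEI estimator is a zero-variance estimator: with probability one, C_SEI(T_v) = Cost(T_v)/|v| for every hypernode v. (Consequence of the paper's Theorem 2 noted after Theorem 3.) -/

import Mathlib

open Finset

/-- A finite rooted tree on a finite node type `V`.  The root is its own parent,
every non-root node has a parent whose depth is one smaller, and the root is the
unique node of depth `0`. -/
structure FinRootedTree (V : Type) [Fintype V] [DecidableEq V] where
  root : V
  parent : V → V
  depth : V → ℕ
  depth_root : depth root = 0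
  parent_root : parent root = root
  depth_parent : ∀ v, v ≠ root → depth (parent v) + 1 = depth v
  eq_root_of_depth_zero : ∀ v, depth v = 0 → v = root

namespace FinRootedTree

variable {V : Type} [Fintype V] [DecidableEq V]

/-- The set of children of a node. -/
def children (T : FinRootedTree V) (x : V) : Finset V :=
  Finset.univ.filter fun w => w ≠ T.root ∧ T.parent w = x

/-- `S(v)`: the set of all children of nodes of a hypernode `v`. -/
def succs (T : FinRootedTree V) (v : Finset V) : Finset V :=
  v.biUnion T.children

/-- The set of nodes of the subtree rooted at `x` (the descendants of `x`,
including `x` itself). -/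
def desc (T : FinRootedTree V) (x : V) : Finset V :=
  Finset.univ.filter fun w =>
    x ∈ (Finset.range (T.depth w + 1)).image fun k => T.parent^[k] w

/-- `Cost(T_x)`: the total cost of the subtree rooted at `x`. -/
noncomputable def subtreeCost (T : FinRootedTree V) (c : V → ℝ) (x : V) : ℝ :=
  ∑ w ∈ T.desc x, c w

/-- `Cost(T_v)`: the total cost of the forest rooted at the hypernode `v`. -/
noncomputable def forestCost (T : FinRootedTree V) (c : V → ℝ) (v : Finset V) : ℝ :=
  ∑ x ∈ v, T.subtreeCost c x

/-- `H(v)`: the hyperchildren of `v` for budget `B`, i.e. the subsets of `S(v)`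
of size `min B |S(v)|`. -/
def hyper (T : FinRootedTree V) (B : ℕ) (v : Finset V) : Finset (Finset V) :=
  (T.succs v).powersetCard (min B (T.succs v).card)

/-- A hypernode: a nonempty set of distinct nodes, all at the same depth. -/
def IsHypernode (T : FinRootedTree V) (v : Finset V) : Prop :=
  v.Nonempty ∧ ∀ a ∈ v, ∀ b ∈ v, T.depth a = T.depth b

/-- Expectation functional of the SEI estimator `C_SEI(T_v)` (with importance
function `r`): `seiE T c B r fuel v g` is `E[g(C_SEI(T_v))]`, defined by the
recursion of Algorithm 2, where the hypernode `w` is drawn from `H(v)` with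
probability `r(w) / (r(S(v)) * C(|S(v)|-1, |w|-1))`, with enough fuel to reach
the leaves. -/
noncomputable def seiE (T : FinRootedTree V) (c : V → ℝ) (B : ℕ)
    (r : V → ℝ) : ℕ → Finset V → (ℝ → ℝ) → ℝ
  | 0, v, g => g ((∑ x ∈ v, c x) / (v.card : ℝ))
  | fuel + 1, v, g =>
      if T.succs v = ∅ then g ((∑ x ∈ v, c x) / (v.card : ℝ))
      else
        ∑ w ∈ T.hyper B v,
          ((∑ a ∈ w, r a) /
              ((∑ a ∈ T.succs v, r a) *
                ((((T.succs v).card - 1).choose (w.card - 1) : ℕ) : ℝ))) *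
            seiE T c B r fuel w fun y =>
              g ((∑ x ∈ v, c x) / (v.card : ℝ) +
                ((w.card : ℝ) / (v.card : ℝ)) *
                  ((∑ a ∈ T.succs v, r a) / (∑ a ∈ w, r a)) * y)

theorem depth_iter (T : FinRootedTree V) (x : V) (k : ℕ) :
    T.depth (T.parent^[k] x) = T.depth x - k := by
  induction k with
  | zero => simp
  | succ k ih =>
    rw [Function.iterate_succ_apply']
    by_cases h : T.parent^[k] x = T.root
    · rw [h, T.parent_root, T.depth_root]
      rw [h, T.depth_root] at ih
      omega
    · have := T.depth_parent _ h
      omega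

theorem depth_lt_card (T : FinRootedTree V) (x : V) : T.depth x < Fintype.card V := by
  have h : Finset.range (T.depth x + 1) ⊆ Finset.univ.image T.depth := by
    intro n hn
    rw [Finset.mem_range] at hn
    refine Finset.mem_image.2 ⟨T.parent^[T.depth x - n] x, Finset.mem_univ _, ?_⟩
    rw [depth_iter]; omega
  have h1 := Finset.card_le_card h
  have h2 := Finset.card_image_le (s := (Finset.univ : Finset V)) (f := T.depth)
  rw [Finset.card_range] at h1
  rw [Finset.card_univ] at h2
  omega

theorem mem_desc (T : FinRootedTree V) (x w : V) :
    w ∈ T.desc x ↔ ∃ k, k ≤ T.depth w ∧ T.parent^[k] w = x := by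
  simp [desc, Nat.lt_succ_iff]

theorem mem_children (T : FinRootedTree V) (x w : V) :
    w ∈ T.children x ↔ w ≠ T.root ∧ T.parent w = x := by
  simp [children]

theorem depth_of_mem_children (T : FinRootedTree V) {x w : V} (h : w ∈ T.children x) :
    T.depth w = T.depth x + 1 := by
  rw [mem_children] at h
  have := T.depth_parent w h.1
  rw [h.2] at this
  exact this.symm

theorem desc_eq (T : FinRootedTree V) (x : V) :
    T.desc x = insert x ((T.children x).biUnion T.desc) := by
  ext w
  rw [Finset.mem_insert, Finset.mem_biUnion]
  constructor
  · intro h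
    obtain ⟨k, hk, rfl⟩ := (T.mem_desc _ _).1 h
    cases k with
    | zero => left; rfl
    | succ j =>
      right
      refine ⟨T.parent^[j] w, (T.mem_children _ _).2 ⟨?_, ?_⟩, (T.mem_desc _ _).2 ⟨j, by omega, rfl⟩⟩
      · intro h0
        have := T.depth_iter w j
        rw [h0, T.depth_root] at this
        omega
      · rw [Function.iterate_succ_apply']
  · rintro (rfl | ⟨y, hy, hw⟩)
    · exact (T.mem_desc _ _).2 ⟨0, by omega, rfl⟩
    · obtain ⟨k, hk, rfl⟩ := (T.mem_desc _ _).1 hw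
      have h1 := T.depth_of_mem_children hy
      rw [depth_iter] at h1
      refine (T.mem_desc _ _).2 ⟨k + 1, by omega, ?_⟩
      rw [Function.iterate_succ_apply']
      exact ((T.mem_children _ _).1 hy).2

theorem subtreeCost_eq (T : FinRootedTree V) (c : V → ℝ) (x : V) :
    T.subtreeCost c x = c x + ∑ y ∈ T.children x, T.subtreeCost c y := by
  unfold subtreeCost
  rw [desc_eq, Finset.sum_insert, Finset.sum_biUnion]
  · intro y hy z hz hyz
    rw [Function.onFun, Finset.disjoint_left]
    intro w hwy hwz
    obtain ⟨k, hk, rfl⟩ := (T.mem_desc _ _).1 hwy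
    obtain ⟨l, hl, rfl⟩ := (T.mem_desc _ _).1 hwz
    have h1 := T.depth_of_mem_children hy
    have h2 := T.depth_of_mem_children hz
    rw [depth_iter] at h1 h2
    have : k = l := by omega
    exact hyz (by rw [this])
  · intro h
    obtain ⟨y, hy, hw⟩ := Finset.mem_biUnion.1 h
    obtain ⟨k, hk, rfl⟩ := (T.mem_desc _ _).1 hw
    have h1 := T.depth_of_mem_children hy
    rw [depth_iter] at h1
    omega

theorem forestCost_eq (T : FinRootedTree V) (c : V → ℝ) (v : Finset V) :
    T.forestCost c v = ∑ x ∈ v, c x + T.forestCost c (T.succs v) := by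
  unfold forestCost succs
  rw [Finset.sum_biUnion, ← Finset.sum_add_distrib]
  · exact Finset.sum_congr rfl fun x _ => T.subtreeCost_eq c x
  · intro y _ z _ hyz
    rw [Function.onFun, Finset.disjoint_left]
    intro w hwy hwz
    exact hyz (((T.mem_children _ _).1 hwy).2.symm.trans ((T.mem_children _ _).1 hwz).2)

theorem card_powersetCard_mem (S : Finset V) (k : ℕ) (a : V) (ha : a ∈ S) :
    ((S.powersetCard (k + 1)).filter fun w => a ∈ w).card = (S.card - 1).choose k := by
  rw [← Finset.card_erase_of_mem ha, ← Finset.card_powersetCard]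
  refine Finset.card_bij' (fun w _ => w.erase a) (fun w _ => insert a w) ?_ ?_ ?_ ?_
  · intro w hw
    rw [Finset.mem_filter, Finset.mem_powersetCard] at hw
    rw [Finset.mem_powersetCard, Finset.card_erase_of_mem hw.2]
    exact ⟨Finset.erase_subset_erase _ hw.1.1, by omega⟩
  · intro w hw
    rw [Finset.mem_powersetCard] at hw
    have : a ∉ w := fun h => by simpa using hw.1 h
    rw [Finset.mem_filter, Finset.mem_powersetCard, Finset.card_insert_of_notMem this]
    exact ⟨⟨Finset.insert_subset ha (hw.1.trans (Finset.erase_subset _ _)), by omega⟩,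
      Finset.mem_insert_self _ _⟩
  · intro w hw
    exact Finset.insert_erase (Finset.mem_filter.1 hw).2
  · intro w hw
    rw [Finset.mem_powersetCard] at hw
    exact Finset.erase_insert fun h => by simpa using hw.1 h

theorem sum_powersetCard_sum (S : Finset V) (k : ℕ) (r : V → ℝ) :
    ∑ w ∈ S.powersetCard (k + 1), ∑ a ∈ w, r a
      = (∑ a ∈ S, r a) * (((S.card - 1).choose k : ℕ) : ℝ) := by
  have h1 : ∀ w ∈ S.powersetCard (k + 1), ∑ a ∈ w, r a = ∑ a ∈ S, if a ∈ w then r a else 0 := by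
    intro w hw
    rw [← Finset.sum_filter, Finset.filter_mem_eq_inter,
      Finset.inter_eq_right.2 (Finset.mem_powersetCard.1 hw).1]
  rw [Finset.sum_congr rfl h1, Finset.sum_comm, Finset.sum_mul]
  refine Finset.sum_congr rfl fun a ha => ?_
  rw [← Finset.sum_filter, Finset.sum_const, card_powersetCard_mem S k a ha, nsmul_eq_mul, mul_comm]

theorem seiE_aux (T : FinRootedTree V) (c : V → ℝ)
    (hpos : ∀ x : V, 0 < T.subtreeCost c x)
    (B : ℕ) (hB : 1 ≤ B) (r : V → ℝ)
    (hrc : ∀ x : V, r x = T.subtreeCost c x) (fuel : ℕ) :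
    ∀ (v : Finset V), v.Nonempty → (∀ x ∈ v, Fintype.card V ≤ fuel + T.depth x) →
      ∀ g : ℝ → ℝ, seiE T c B r fuel v g = g (T.forestCost c v / (v.card : ℝ)) := by
  have hr : ∀ s : Finset V, ∑ a ∈ s, r a = T.forestCost c s := fun s =>
    Finset.sum_congr rfl fun x _ => hrc x
  have hfpos : ∀ s : Finset V, s.Nonempty → 0 < T.forestCost c s := fun s hs =>
    Finset.sum_pos (fun x _ => hpos x) hs
  induction fuel with
  | zero =>
    rintro v ⟨x, hx⟩ hd
    have h1 := hd x hx
    have h2 := T.depth_lt_card x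
    omega
  | succ n ih =>
    intro v hv hd g
    rw [seiE]
    split_ifs with hS
    · rw [forestCost_eq, hS]
      simp [forestCost]
    · have hSne := Finset.nonempty_iff_ne_empty.2 hS
      have hSc := hSne.card_pos
      obtain ⟨k, hk⟩ : ∃ k, min B (T.succs v).card = k + 1 :=
        ⟨min B (T.succs v).card - 1, by omega⟩
      have hSp := hfpos _ hSne
      have hch : (0 : ℝ) < (((T.succs v).card - 1).choose k : ℕ) := by
        exact_mod_cast Nat.choose_pos (by omega)
      have hvc : (0 : ℝ) < v.card := by exact_mod_cast hv.card_pos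
      have key : ∀ w ∈ T.hyper B v,
          ((∑ a ∈ w, r a) /
              ((∑ a ∈ T.succs v, r a) *
                ((((T.succs v).card - 1).choose (w.card - 1) : ℕ) : ℝ))) *
            (seiE T c B r n w fun y =>
              g ((∑ x ∈ v, c x) / (v.card : ℝ) +
                ((w.card : ℝ) / (v.card : ℝ)) *
                  ((∑ a ∈ T.succs v, r a) / (∑ a ∈ w, r a)) * y))
          = (∑ a ∈ w, r a) * (g (T.forestCost c v / (v.card : ℝ)) /
              (T.forestCost c (T.succs v) * ((((T.succs v).card - 1).choose k : ℕ) : ℝ))) := by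
        intro w hw
        rw [hyper, hk, Finset.mem_powersetCard] at hw
        have hwne : w.Nonempty := Finset.card_pos.1 (by omega)
        have hwc : (0 : ℝ) < w.card := by exact_mod_cast hwne.card_pos
        have hwp := hfpos w hwne
        rw [ih w hwne, hw.2, hr, hr, Nat.add_sub_cancel]
        · have : (∑ x ∈ v, c x) / (v.card : ℝ) + (((k + 1 : ℕ) : ℝ) / (v.card : ℝ)) *
              (T.forestCost c (T.succs v) / T.forestCost c w) *
                (T.forestCost c w / ((k + 1 : ℕ) : ℝ)) = T.forestCost c v / (v.card : ℝ) := by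
            rw [hw.2] at hwc
            rw [T.forestCost_eq c v]
            field_simp
          rw [this]
          ring
        · intro y hy
          obtain ⟨x, hx, hyx⟩ := Finset.mem_biUnion.1 (hw.1 hy)
          have h1 := hd x hx
          have h2 := T.depth_of_mem_children hyx
          omega
      rw [Finset.sum_congr rfl key, ← Finset.sum_mul, hyper, hk, sum_powersetCard_sum, hr]
      field_simp

/-- If the importance function is the exact subtree-cost function
`r(x) = Cost(T_x)` (all subtree costs positive), then the SEI estimator is a
zero-variance estimator: with probability one `C_SEI(T_v) = Cost(T_v)/|v|`
(i.e. the distribution of `C_SEI(T_v)` is the point mass at `Cost(T_v)/|v|`,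
so `E[g(C_SEI(T_v))] = g(Cost(T_v)/|v|)` for every `g`). -/
theorem sei_zero_variance (T : FinRootedTree V) (c : V → ℝ) (hc : ∀ x, 0 ≤ c x)
    (hpos : ∀ x : V, 0 < T.subtreeCost c x)
    (B : ℕ) (hB : 1 ≤ B) (r : V → ℝ)
    (hrc : ∀ x : V, r x = T.subtreeCost c x)
    (v : Finset V) (hv : T.IsHypernode v) (g : ℝ → ℝ) :
    seiE T c B r (Fintype.card V) v g = g (T.forestCost c v / (v.card : ℝ)) := by
  exact seiE_aux T c hpos B hB r hrc _ v hv.1 (fun x _ => by omega) g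

end FinRootedTree
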